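/- arXiv:1510.02421 — 2 statements merged into one kernel-verified Lean document; each statement's English description precedes it below -/
import Mathlib

section
/- Let G be a d_G-regular graph and H a d_H-regular graph such that the lexicographic product G*H has at least one edge. If γ_P(H) = 1 and γ(G) = 1, then Z(G*H) = d_G·|V(H)| + d_H. -/
namespace PaperPD

open SimpleGraph

variable {V α β : Type*}

/-- Vertices that eventually become blue in the standard zero forcing process
starting from the blue set `B`. -/
inductive ZFClosure (G : SimpleGraph V) (B : Set V) : V → Prop
  | init (v : V) (hv : v ∈ B) : ZFClosure G B v
  | force (u w : V) (hu : ZFClosure G B u) (huw : G.Adj u w)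
      (h : ∀ x, G.Adj u x → x ≠ w → ZFClosure G B x) : ZFClosure G B w

/-- `B` is a zero forcing set of `G`. -/
def IsZeroForcingSet (G : SimpleGraph V) (B : Set V) : Prop :=
  ∀ v, ZFClosure G B v

/-- The zero forcing number `Z(G)`. -/
noncomputable def zeroForcingNumber (G : SimpleGraph V) [Fintype V] : ℕ :=
  sInf {k | ∃ B : Finset V, B.card = k ∧ IsZeroForcingSet G ↑B}

/-- Vertices that eventually become blue in the skew zero forcing process
starting from the blue set `B` (the forcing vertex need not be blue). -/
inductive SkewZFClosure (G : SimpleGraph V) (B : Set V) : V → Prop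
  | init (v : V) (hv : v ∈ B) : SkewZFClosure G B v
  | force (u w : V) (huw : G.Adj u w)
      (h : ∀ x, G.Adj u x → x ≠ w → SkewZFClosure G B x) : SkewZFClosure G B w

/-- `B` is a skew zero forcing set of `G`. -/
def IsSkewZeroForcingSet (G : SimpleGraph V) (B : Set V) : Prop :=
  ∀ v, SkewZFClosure G B v

/-- The skew zero forcing number `Z⁻(G)`. -/
noncomputable def skewZeroForcingNumber (G : SimpleGraph V) [Fintype V] : ℕ :=
  sInf {k | ∃ B : Finset V, B.card = k ∧ IsSkewZeroForcingSet G ↑B}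

/-- The closed neighborhood `N[S]` of a set of vertices. -/
def closedNbhd (G : SimpleGraph V) (S : Set V) : Set V :=
  S ∪ {v | ∃ u ∈ S, G.Adj u v}

/-- `S` is a power dominating set of `G`, i.e. `N[S]` is a zero forcing set. -/
def IsPowerDominatingSet (G : SimpleGraph V) (S : Set V) : Prop :=
  IsZeroForcingSet G (closedNbhd G S)

/-- The power domination number `γ_P(G)`. -/
noncomputable def powerDominationNumber (G : SimpleGraph V) [Fintype V] : ℕ :=
  sInf {k | ∃ S : Finset V, S.card = k ∧ IsPowerDominatingSet G ↑S}

/-- `S` is a dominating set of `G` (`N[S] = V`). -/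
def IsDominatingSet (G : SimpleGraph V) (S : Set V) : Prop :=
  ∀ v, v ∈ closedNbhd G S

/-- The domination number `γ(G)`. -/
noncomputable def dominationNumber (G : SimpleGraph V) [Fintype V] : ℕ :=
  sInf {k | ∃ S : Finset V, S.card = k ∧ IsDominatingSet G ↑S}

/-- `S` is a total dominating set of `G` (`N(S) = V`). -/
def IsTotalDominatingSet (G : SimpleGraph V) (S : Set V) : Prop :=
  ∀ v, ∃ u ∈ S, G.Adj u v

/-- The total domination number `γ_t(G)`. -/
noncomputable def totalDominationNumber (G : SimpleGraph V) [Fintype V] : ℕ :=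
  sInf {k | ∃ S : Finset V, S.card = k ∧ IsTotalDominatingSet G ↑S}

/-- The degree of a vertex. -/
noncomputable def deg (G : SimpleGraph V) (v : V) : ℕ :=
  (G.neighborSet v).ncard

/-- The maximum degree `Δ(G)`. -/
noncomputable def maxDeg (G : SimpleGraph V) [Fintype V] : ℕ :=
  Finset.univ.sup fun v => deg G v

/-- `A` is a symmetric real matrix whose off-diagonal nonzero pattern is
described by the graph `G`, i.e. `A ∈ S(G)`. -/
def MatrixOfGraph (G : SimpleGraph V) (A : Matrix V V ℝ) : Prop :=
  A.IsSymm ∧ ∀ i j, i ≠ j → (A i j ≠ 0 ↔ G.Adj i j)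

/-- The nullity of a square real matrix. -/
noncomputable def nullity [Fintype V] [DecidableEq V] (A : Matrix V V ℝ) : ℕ :=
  Fintype.card V - A.rank

/-- The maximum nullity `M(G)`. -/
noncomputable def maxNullity (G : SimpleGraph V) [Fintype V] [DecidableEq V] : ℕ :=
  sSup {k | ∃ A : Matrix V V ℝ, MatrixOfGraph G A ∧ nullity A = k}

/-- The tensor (direct) product of two simple graphs. -/
def tensorProd (G : SimpleGraph α) (H : SimpleGraph β) : SimpleGraph (α × β) where
  Adj p q := G.Adj p.1 q.1 ∧ H.Adj p.2 q.2
  symm := ⟨fun _ _ h => ⟨h.1.symm, h.2.symm⟩⟩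
  loopless := ⟨fun p h => G.loopless.irrefl p.1 h.1⟩

/-- The lexicographic product of two simple graphs. -/
def lexProd (G : SimpleGraph α) (H : SimpleGraph β) : SimpleGraph (α × β) where
  Adj p q := G.Adj p.1 q.1 ∨ (p.1 = q.1 ∧ H.Adj p.2 q.2)
  symm := ⟨fun _ _ h => h.elim (fun h' => Or.inl h'.symm) (fun h' => Or.inr ⟨h'.1.symm, h'.2.symm⟩)⟩
  loopless := ⟨fun p h => h.elim (fun h' => G.loopless.irrefl p.1 h') (fun h' => H.loopless.irrefl p.2 h'.2)⟩


lemma aux_lower {V : Type*} [Finite V] (K : SimpleGraph V) (D : ℕ) (hD : ∀ v, deg K v = D)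
    (p : V) (B : Finset V) (hB : IsZeroForcingSet K (B : Set V)) : D ≤ B.card := by
  classical
  by_cases h : ∃ u ∈ B, ∃ w, K.Adj u w ∧ ∀ x, K.Adj u x → x ≠ w → x ∈ B
  · obtain ⟨u, hu, w, huw, hx⟩ := h
    have hsub : K.neighborSet u ⊆ insert w ((B.erase u : Finset V) : Set V) := by
      intro x hxu
      have hxu' : K.Adj u x := hxu
      by_cases hxw : x = w
      · exact Or.inl hxw
      · right
        simp only [Finset.coe_erase, Set.mem_diff, Finset.mem_coe, Set.mem_singleton_iff]
        exact ⟨hx x hxu' hxw, hxu'.ne'⟩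
    have h1 := Set.ncard_le_ncard hsub (Set.toFinite _)
    have h2 := Set.ncard_insert_le w ((B.erase u : Finset V) : Set V)
    rw [Set.ncard_coe_finset] at h2
    have h3 := Finset.card_erase_add_one hu
    have h4 := hD u
    unfold deg at h4
    omega
  · have hall : ∀ v, v ∈ B := by
      intro v
      have hv := hB v
      induction hv with
      | init v hv => exact hv
      | force u w hu huw hx ih ihx =>
        exfalso
        exact h ⟨u, ih, w, huw, ihx⟩
    have h4 := hD p
    unfold deg at h4
    have h1 : (K.neighborSet p).ncard ≤ (B : Set V).ncard :=
      Set.ncard_le_ncard (fun x _ => hall x) (Set.toFinite _)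
    rw [Set.ncard_coe_finset] at h1
    omega

lemma aux_deg {α β : Type*} [Fintype α] [Fintype β] (G : SimpleGraph α) (H : SimpleGraph β)
    (p : α × β) : deg (lexProd G H) p = deg G p.1 * Fintype.card β + deg H p.2 := by
  have : (lexProd G H).neighborSet p =
      (G.neighborSet p.1 ×ˢ (Set.univ : Set β)) ∪ (({p.1} : Set α) ×ˢ H.neighborSet p.2) := by
    ext q
    simp only [SimpleGraph.mem_neighborSet, lexProd, Set.mem_union, Set.mem_prod, Set.mem_univ,
      and_true, Set.mem_singleton_iff]
    constructor
    · rintro (h | h)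
      · exact Or.inl h
      · exact Or.inr ⟨h.1.symm, h.2⟩
    · rintro (h | h)
      · exact Or.inl h
      · exact Or.inr ⟨h.1.symm, h.2⟩
  unfold deg
  rw [this, Set.ncard_union_eq _ (Set.toFinite _) (Set.toFinite _), Set.ncard_prod, Set.ncard_prod,
    Set.ncard_univ, Set.ncard_singleton, one_mul, Nat.card_eq_fintype_card]
  rw [Set.disjoint_left]
  rintro q ⟨h1, -⟩ ⟨h2, -⟩
  rw [Set.mem_singleton_iff] at h2
  rw [h2] at h1
  exact G.loopless.irrefl _ h1

/-- If `G` is `d_G`-regular, `H` is `d_H`-regular, `G*H` has an edge,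
`γ_P(H) = 1`, and `γ(G) = 1`, then `Z(G*H) = d_G|V(H)| + d_H`. -/
theorem stmt17 {α β : Type*} [Fintype α] [Fintype β]
    (G : SimpleGraph α) (H : SimpleGraph β) (dG dH : ℕ)
    (hG : ∀ v, deg G v = dG) (hH : ∀ v, deg H v = dH)
    (hE : ∃ p q, (lexProd G H).Adj p q)
    (hPDH : powerDominationNumber H = 1) (hDG : dominationNumber G = 1) :
    zeroForcingNumber (lexProd G H) = dG * Fintype.card β + dH := by
  classical
  obtain ⟨v, hv⟩ : ∃ v, IsPowerDominatingSet H {v} := by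
    have hne := Nat.nonempty_of_pos_sInf
      (by unfold powerDominationNumber at hPDH; rw [hPDH]; exact Nat.one_pos)
    have hm := Nat.sInf_mem hne
    unfold powerDominationNumber at hPDH
    rw [hPDH] at hm
    obtain ⟨S, hS, hS'⟩ := hm
    obtain ⟨v, rfl⟩ := Finset.card_eq_one.1 hS
    exact ⟨v, by simpa using hS'⟩
  obtain ⟨g, hg⟩ : ∃ g, IsDominatingSet G {g} := by
    have hne := Nat.nonempty_of_pos_sInf
      (by unfold dominationNumber at hDG; rw [hDG]; exact Nat.one_pos)
    have hm := Nat.sInf_mem hne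
    unfold dominationNumber at hDG
    rw [hDG] at hm
    obtain ⟨S, hS, hS'⟩ := hm
    obtain ⟨v, rfl⟩ := Finset.card_eq_one.1 hS
    exact ⟨v, by simpa using hS'⟩
  have hD : ∀ p, deg (lexProd G H) p = dG * Fintype.card β + dH := by
    intro p
    rw [aux_deg, hG, hH]
  set K := lexProd G H with hK
  obtain ⟨p₀, q₀, hpq⟩ := hE
  have hmem : ∃ B : Finset (α × β), B.card = dG * Fintype.card β + dH ∧
      IsZeroForcingSet K (B : Set (α × β)) := by
    have hpos : (K.neighborSet (g, v)).Nonempty := by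
      rw [← Set.ncard_pos (Set.toFinite _)]
      have h1 : (K.neighborSet (g, v)).ncard = (K.neighborSet p₀).ncard :=
        (hD (g, v)).trans (hD p₀).symm
      rw [h1, Set.ncard_pos (Set.toFinite _)]
      exact ⟨q₀, hpq⟩
    obtain ⟨w, hw⟩ := hpos
    have hw' : K.Adj (g, v) w := hw
    set N : Finset (α × β) := (K.neighborSet (g, v)).toFinite.toFinset with hN
    have hmN : ∀ x, x ∈ N ↔ K.Adj (g, v) x := by intro x; simp [hN]
    have hNc : N.card = dG * Fintype.card β + dH := by
      rw [← hD (g, v)]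
      exact (Set.ncard_eq_toFinset_card _ _).symm
    refine ⟨insert (g, v) (N.erase w), ?_, ?_⟩
    · rw [Finset.card_insert_of_notMem, Finset.card_erase_add_one ((hmN w).2 hw'), hNc]
      intro h
      exact K.loopless.irrefl _ ((hmN _).1 (Finset.mem_of_mem_erase h))
    · set B : Set (α × β) := ((insert (g, v) (N.erase w) : Finset (α × β)) : Set (α × β)) with hBdef
      have hself : ZFClosure K B (g, v) := ZFClosure.init _ (by simp [hBdef])
      have hne : ∀ x, K.Adj (g, v) x → x ≠ w → ZFClosure K B x := by
        intro x hx hxw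
        apply ZFClosure.init
        rw [hBdef, Finset.mem_coe]
        exact Finset.mem_insert_of_mem (Finset.mem_erase.2 ⟨hxw, (hmN x).2 hx⟩)
      have hall : ∀ x, K.Adj (g, v) x → ZFClosure K B x := by
        intro x hx
        by_cases hxw : x = w
        · rw [hxw]
          exact ZFClosure.force _ _ hself hw' hne
        · exact hne x hx hxw
      have hlift : ∀ h, ZFClosure H (closedNbhd H {v}) h → ZFClosure K B (g, h) := by
        intro h hh
        induction hh with
        | init h hh =>
          rcases hh with hh | ⟨u, hu, huh⟩
          · rw [Set.mem_singleton_iff] at hh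
            rw [hh]
            exact hself
          · rw [Set.mem_singleton_iff] at hu
            subst hu
            exact hall _ (Or.inr ⟨rfl, huh⟩)
        | force u x hu hux hx ih ihx =>
          refine ZFClosure.force (g, u) (g, x) ih (Or.inr ⟨rfl, hux⟩) ?_
          rintro ⟨a, b⟩ hab hne'
          rcases hab with hab | ⟨h1, h2⟩
          · exact hall _ (Or.inl hab)
          · have h1' : g = a := h1
            subst h1'
            exact ihx b h2 (fun hb => hne' (by rw [hb]))
      rintro ⟨a, b⟩
      rcases hg a with ha | ⟨u, hu, hua⟩
      · rw [Set.mem_singleton_iff] at ha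
        rw [ha]
        exact hlift b (hv b)
      · rw [Set.mem_singleton_iff] at hu
        subst hu
        exact hall _ (Or.inl hua)
  unfold zeroForcingNumber
  apply le_antisymm
  · exact Nat.sInf_le hmem
  · obtain ⟨B, hB, hB'⟩ := Nat.sInf_mem (s := {k | ∃ B : Finset (α × β), B.card = k ∧
      IsZeroForcingSet K (B : Set (α × β))}) ⟨_, hmem⟩
    rw [← hB]
    exact aux_lower K _ hD p₀ B hB'

end PaperPD
end

section
/- For n ≥ 2 and m ≥ 3, the zero forcing number of the lexicographic product of the complete graph K_n with the cycle C_m satisfies Z(K_n * C_m) = (n−1)m + 2. -/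
namespace PaperPD

open SimpleGraph

variable {V α β : Type*}

theorem cyc_adj_succ (m k : ℕ) (h : k + 1 < m) :
    (cycleGraph m).Adj ⟨k, by omega⟩ ⟨k+1, h⟩ := by
  rw [cycleGraph_adj']
  right
  rw [Fin.sub_val_of_le (by simp [Fin.le_def])]
  simp

theorem cyc_adj_cases (m k : ℕ) (h : k + 2 < m) (x : Fin m)
    (hx : (cycleGraph m).Adj ⟨k+1, by omega⟩ x) : x.val = k ∨ x.val = k + 2 := by
  rw [cycleGraph_adj'] at hx
  have hxm := x.isLt
  rcases le_total x ⟨k+1, by omega⟩ with hle | hle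
  · rcases eq_or_lt_of_le hle with he | hlt
    · have : NeZero m := ⟨by omega⟩
      simp [he] at hx
    · have h1 := Fin.sub_val_of_le hle
      have h2 := Fin.coe_sub_iff_lt.2 hlt
      simp only [Fin.lt_def] at hlt
      simp only at h1 h2 hlt
      omega
  · rcases eq_or_lt_of_le hle with he | hlt
    · have : NeZero m := ⟨by omega⟩
      simp [he] at hx
    · have h1 := Fin.sub_val_of_le hle
      have h2 := Fin.coe_sub_iff_lt.2 hlt
      simp only [Fin.lt_def] at hlt
      simp only at h1 h2 hlt
      omega

theorem card_nb (n m : ℕ) (hm : 3 ≤ m) (a : Fin n) (s : Finset (Fin m)) (hs : s.card = 2) :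
    ((Finset.univ.erase a) ×ˢ (Finset.univ : Finset (Fin m)) ∪ {a} ×ˢ s).card
      = (n - 1) * m + 2 := by
  rw [Finset.card_union_of_disjoint]
  · simp [Finset.card_product, hs]
  · rw [Finset.disjoint_left]
    rintro ⟨i, j⟩ h1 h2
    simp at h1 h2
    exact h1 h2.2.symm

theorem stmt18 (n m : ℕ) (hn : 2 ≤ n) (hm : 3 ≤ m) :
    zeroForcingNumber (lexProd (⊤ : SimpleGraph (Fin n)) (cycleGraph m)) = (n - 1) * m + 2 := by
  unfold zeroForcingNumber
  have hmem : (n - 1) * m + 2 ∈ {k | ∃ B : Finset (Fin n × Fin m), B.card = k ∧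
      IsZeroForcingSet (lexProd (⊤ : SimpleGraph (Fin n)) (cycleGraph m)) ↑B} := by
    let a : Fin n := ⟨0, by omega⟩
    let s : Finset (Fin m) := {⟨0, by omega⟩, ⟨1, by omega⟩}
    refine ⟨_, card_nb n m hm a s (Finset.card_pair (by simp)), ?_⟩
    have key : ∀ k (hk : k < m), ZFClosure (lexProd (⊤ : SimpleGraph (Fin n)) (cycleGraph m))
        ↑((Finset.univ.erase a) ×ˢ (Finset.univ : Finset (Fin m)) ∪ {a} ×ˢ s) (a, ⟨k, hk⟩) := by
      intro k
      induction k using Nat.strong_induction_on with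
      | _ k ih =>
      intro hk
      match k, ih, hk with
      | 0, _, hk => exact .init _ (by simp [s])
      | 1, _, hk => exact .init _ (by simp [s])
      | k+2, ih, hk =>
        refine .force (a, ⟨k+1, by omega⟩) _ (ih _ (by omega) _)
          (Or.inr ⟨rfl, cyc_adj_succ m (k+1) hk⟩) ?_
        rintro ⟨i, j⟩ hadj hne
        by_cases hi : i = a
        · subst hi
          rcases hadj with h | ⟨_, h⟩
          · simp at h
          · rcases cyc_adj_cases m k hk j h with h | h
            · have : j = ⟨k, by omega⟩ := Fin.ext h
              rw [this]
              exact ih _ (by omega) _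
            · exact absurd (by rw [show j = ⟨k+2, hk⟩ from Fin.ext h]) hne
        · exact .init _ (by simp [hi])
    rintro ⟨i, j⟩
    by_cases hi : i = a
    · subst hi; exact key j.1 j.2
    · exact .init _ (by simp [hi])
  apply le_antisymm
  · exact Nat.sInf_le hmem
  · apply le_csInf ⟨_, hmem⟩
    rintro k ⟨B, rfl, hB⟩
    by_contra hlt
    push Not at hlt
    have hall : ∀ v, v ∈ B := by
      intro v
      induction hB v with
      | init v hv => exact hv
      | force u w _ huw _ ihu ih =>
        by_contra hw
        have hd : ((cycleGraph m).neighborFinset u.2).card = 2 := by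
          obtain ⟨l, rfl⟩ : ∃ l, m = l + 3 := ⟨m - 3, by omega⟩
          exact cycleGraph_degree_three_le
        have hc := card_nb n m hm u.1 _ hd
        set S := (Finset.univ.erase u.1) ×ˢ (Finset.univ : Finset (Fin m)) ∪
          {u.1} ×ˢ ((cycleGraph m).neighborFinset u.2) with hS
        have hSmem : ∀ x, x ∈ S ↔ (lexProd (⊤ : SimpleGraph (Fin n)) (cycleGraph m)).Adj u x := by
          rintro ⟨i, j⟩
          simp [hS, lexProd, eq_comm, and_comm]
        have hsub : insert u (S.erase w) ⊆ B := by
          intro x hx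
          rcases Finset.mem_insert.1 hx with rfl | hx
          · exact ihu
          · exact ih x ((hSmem x).1 (Finset.mem_of_mem_erase hx)) (Finset.ne_of_mem_erase hx)
        have h1 := Finset.card_le_card hsub
        rw [Finset.card_insert_of_notMem, Finset.card_erase_of_mem ((hSmem w).2 huw)] at h1
        · omega
        · intro h
          exact (lexProd (⊤ : SimpleGraph (Fin n)) (cycleGraph m)).loopless.irrefl u
            ((hSmem u).1 (Finset.mem_of_mem_erase h))
    have hu : B = Finset.univ := Finset.eq_univ_iff_forall.2 hall
    rw [hu] at hlt
    simp at hlt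
    obtain ⟨l, rfl⟩ : ∃ l, n = l + 1 := ⟨n - 1, by omega⟩
    simp at hlt
    nlinarith

end PaperPD
end
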